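/- Let G=(V,E) and G'=(V',E') be finite connected simple graphs with nonempty vertex sets such that G is a subgraph of G' (V ⊆ V' and E ⊆ E'), and let γ(G), γ(G') be their growth rates. Then γ(G) ≤ γ(G'), and γ(G) = γ(G') if and only if G = G' (i.e. V = V' and E = E'). -/

import Mathlib

open MeasureTheory Filter Topology
open scoped ENNReal Classical

/-- The ballistic deposition height process on a graph `G`, started from `h0`,
driven by the sequence of chosen vertices `X`. -/
noncomputable def heightProcess {V : Type*} [Fintype V] (G : SimpleGraph V)
    (h0 : V → ℕ) (X : ℕ → V) : ℕ → V → ℕ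
  | 0 => h0
  | n + 1 => fun x =>
      if x = X n then
        1 + Finset.univ.sup (fun y =>
          if y = x ∨ G.Adj x y then heightProcess G h0 X n y else 0)
      else heightProcess G h0 X n x

/-- `X` is an i.i.d. sequence of uniformly distributed `V`-valued random variables on `(Ω, μ)`:
every finite cylinder event has the product-of-uniform probabilities. -/
def IsUniformIID {V : Type*} [Fintype V] {Ω : Type*} [MeasurableSpace Ω]
    (μ : Measure Ω) (X : ℕ → Ω → V) : Prop :=
  (∀ (n : ℕ) (v : V), MeasurableSet {ω | X n ω = v}) ∧
  (∀ (n : ℕ) (f : ℕ → V), μ {ω | ∀ k < n, X k ω = f k} = (Fintype.card V : ℝ≥0∞)⁻¹ ^ n)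

/-- `γ` is the growth rate of `G`: `γ > 0` and, for any i.i.d. uniform driving sequence,
almost surely `(#V/n) · max_x H_{x,n} → γ` and `(#V/n) · min_x H_{x,n} → γ`. -/
def IsGrowthRate {V : Type*} [Fintype V] (G : SimpleGraph V) (γ : ℝ) : Prop :=
  0 < γ ∧
  ∀ {Ω : Type} [MeasurableSpace Ω] (μ : Measure Ω) [IsProbabilityMeasure μ]
    (X : ℕ → Ω → V), IsUniformIID μ X →
    (∀ᵐ ω ∂μ, Tendsto (fun n : ℕ =>
        (Fintype.card V : ℝ) *
          (⨆ x : V, (heightProcess G (fun _ => 0) (fun k => X k ω) n x : ℝ)) / n)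
      atTop (𝓝 γ)) ∧
    (∀ᵐ ω ∂μ, Tendsto (fun n : ℕ =>
        (Fintype.card V : ℝ) *
          (⨅ x : V, (heightProcess G (fun _ => 0) (fun k => X k ω) n x : ℝ)) / n)
      atTop (𝓝 γ))

/-!
Couple the two processes: in a uniform driving sequence `C` on `V'`, replace the successive entries
that lie in `V` by the successive terms of an independent uniform driving sequence `Y` on `V`. The
result is again uniform, and the process of `G` run along it is the process of `G` run along `Y`
with time slowed down by the asymptotic factor `#V / #V'`, which the normalization in the growth
rate absorbs. So both growth rates can be read off one driving sequence on `V'`, where more edges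
give larger heights; this gives `γ(G) ≤ γ(G')`.

If `G ≠ G'`, then, `G'` being connected, it has an edge that `G` lacks, and there is a finite word
`w` of vertices along which `G'` gains at least one more unit of height than `G` does, whatever
the common initial profile. By the law of large numbers `w` occurs as a block of the driving
sequence with positive frequency, and these gains accumulate because deposition commutes with
adding a constant to all heights; so `γ(G) < γ(G')`.
-/

open ProbabilityTheory

section Deposition

variable {V : Type*} [Fintype V] {G G' : SimpleGraph V}

/-- One step of ballistic deposition: the height profile obtained from `h` by dropping a particle
at `v`. The body matches `heightProcess`, so that one step of the latter is this map by `rfl`. -/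
noncomputable def deposit (G : SimpleGraph V) (v : V) (h : V → ℕ) : V → ℕ := fun x =>
  if x = v then 1 + Finset.univ.sup (fun y => if y = x ∨ G.Adj x y then h y else 0) else h x

lemma heightProcess_succ (G : SimpleGraph V) (h₀ : V → ℕ) (X : ℕ → V) (n : ℕ) :
    heightProcess G h₀ X (n + 1) = deposit G (X n) (heightProcess G h₀ X n) :=
  rfl

lemma deposit_of_ne (G : SimpleGraph V) {v x : V} (hx : x ≠ v) (h : V → ℕ) :
    deposit G v h x = h x :=
  if_neg hx

lemma deposit_self_le_iff {v : V} {h : V → ℕ} {M : ℕ} :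
    deposit G v h v ≤ M ↔ ∀ y, y = v ∨ G.Adj v y → h y < M := by
  rcases M with _ | M
  · simpa [deposit] using ⟨v, fun hv => absurd rfl hv⟩
  · simp only [deposit, if_true, add_comm 1, add_le_add_iff_right, Finset.sup_le_iff,
      Finset.mem_univ, true_imp_iff, Nat.lt_succ_iff]
    refine forall_congr' fun y => ?_
    split_ifs with hy <;> simp [hy]

lemma lt_deposit_self (G : SimpleGraph V) (v : V) (h : V → ℕ) : h v < deposit G v h v :=
  deposit_self_le_iff.1 le_rfl v (Or.inl rfl)

lemma lt_deposit_of_adj {v y : V} (hvy : G.Adj v y) (h : V → ℕ) : h y < deposit G v h v :=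
  deposit_self_le_iff.1 le_rfl y (Or.inr hvy)

lemma le_deposit (G : SimpleGraph V) (v : V) (h : V → ℕ) : h ≤ deposit G v h := by
  intro x
  obtain rfl | hx := eq_or_ne x v
  · exact (lt_deposit_self G x h).le
  · exact (deposit_of_ne G hx h).ge

lemma deposit_mono (hG : G ≤ G') (v : V) {h h' : V → ℕ} (hh : h ≤ h') :
    deposit G v h ≤ deposit G' v h' := by
  intro x
  obtain rfl | hx := eq_or_ne x v
  · exact deposit_self_le_iff.2 fun y hy =>
      (hh y).trans_lt (deposit_self_le_iff.1 le_rfl y (hy.imp_right (hG ·)))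
  · simpa only [deposit_of_ne _ hx] using hh x

lemma deposit_add_natCast (G : SimpleGraph V) (v : V) (h : V → ℕ) (k : ℕ) :
    deposit G v (h + k) = deposit G v h + k := by
  ext x
  obtain rfl | hx := eq_or_ne x v
  · refine eq_of_forall_ge_iff fun M => ?_
    obtain hkM | hMk := le_total k M
    · obtain ⟨m, rfl⟩ := Nat.exists_eq_add_of_le' hkM
      simp [deposit_self_le_iff]
    · have hpos := lt_deposit_self G x h
      have hposk := lt_deposit_self G x (h + k)
      simp only [Pi.add_apply, Pi.natCast_apply, Nat.cast_id] at hposk ⊢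
      omega
  · simp [deposit_of_ne _ hx]

/-- The height profile obtained from `h` by dropping particles successively at the vertices of the
word `w`; deterministic words are spliced into the random driving sequence to compare two graphs. -/
noncomputable def depositWord (G : SimpleGraph V) (w : List V) (h : V → ℕ) : V → ℕ :=
  w.foldl (fun h v => deposit G v h) h

lemma depositWord_cons (G : SimpleGraph V) (v : V) (w : List V) (h : V → ℕ) :
    depositWord G (v :: w) h = depositWord G w (deposit G v h) :=
  rfl

lemma depositWord_append (G : SimpleGraph V) (u w : List V) (h : V → ℕ) :
    depositWord G (u ++ w) h = depositWord G w (depositWord G u h) :=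
  List.foldl_append

lemma heightProcess_add (G : SimpleGraph V) (h₀ : V → ℕ) (X : ℕ → V) (m l : ℕ) :
    heightProcess G h₀ X (m + l) =
      depositWord G (List.ofFn fun r : Fin l => X (m + r)) (heightProcess G h₀ X m) := by
  induction l with
  | zero => rfl
  | succ l ih =>
    rw [← add_assoc, heightProcess_succ, ih, List.ofFn_succ', List.concat_eq_append,
      depositWord_append]
    rfl

lemma le_depositWord (G : SimpleGraph V) (w : List V) (h : V → ℕ) : h ≤ depositWord G w h := by
  induction w generalizing h with
  | nil => exact le_rfl
  | cons v w ih => exact (le_deposit G v h).trans (ih _)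

lemma depositWord_mono (hG : G ≤ G') (w : List V) {h h' : V → ℕ} (hh : h ≤ h') :
    depositWord G w h ≤ depositWord G' w h' := by
  induction w generalizing h h' with
  | nil => exact hh
  | cons v _ ih => exact ih (deposit_mono hG v hh)

lemma depositWord_add_natCast (G : SimpleGraph V) (w : List V) (h : V → ℕ) (k : ℕ) :
    depositWord G w (h + k) = depositWord G w h + k := by
  induction w generalizing h with
  | nil => rfl
  | cons v w ih => rw [depositWord_cons, deposit_add_natCast, ih, depositWord_cons]

lemma deposit_le_natCast_add_one (G : SimpleGraph V) (v : V) {h : V → ℕ} {M : ℕ}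
    (hM : h ≤ M) : deposit G v h ≤ (M + 1 : ℕ) := by
  intro x
  obtain rfl | hx := eq_or_ne x v
  · exact deposit_self_le_iff.2 fun y _ => Nat.lt_succ_of_le (hM y)
  · exact (deposit_of_ne G hx h).trans_le ((hM x).trans (Nat.le_succ M))

lemma depositWord_le_natCast_add_length (G : SimpleGraph V) (w : List V) {h : V → ℕ} {M : ℕ}
    (hM : h ≤ M) : depositWord G w h ≤ (M + w.length : ℕ) := by
  induction w generalizing h M with
  | nil => exact hM
  | cons v w ih =>
    rw [depositWord_cons, List.length_cons, add_comm w.length, ← add_assoc]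
    exact ih (deposit_le_natCast_add_one G v hM)

lemma exists_le_depositWord_of_walk {x y : V} (p : G.Walk x y) :
    ∃ w, ∀ h, h x ≤ depositWord G w h y := by
  induction p with
  | nil => exact ⟨[], fun h => le_rfl⟩
  | @cons x v _ hxv _ ih =>
    obtain ⟨w, hw⟩ := ih
    exact ⟨v :: w, fun h => (lt_deposit_of_adj hxv.symm h).le.trans (hw _)⟩

lemma exists_le_depositWord_of_connected (hG : G.Connected) :
    ∃ w, ∀ (h : V → ℕ) (x y : V), h x ≤ depositWord G w h y := by
  choose w hw using fun p : V × V => exists_le_depositWord_of_walk (hG.preconnected p.1 p.2).some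
  refine ⟨Finset.univ.toList.flatMap w, fun h x y => ?_⟩
  obtain ⟨l₁, l₂, hl⟩ := List.append_of_mem (Finset.mem_toList.2 (Finset.mem_univ (x, y)))
  rw [hl, List.flatMap_append, List.flatMap_cons, depositWord_append, depositWord_append]
  calc h x ≤ depositWord G (l₁.flatMap w) h x := le_depositWord G _ h x
    _ ≤ depositWord G (w (x, y)) (depositWord G (l₁.flatMap w) h) y := hw (x, y) _
    _ ≤ _ := le_depositWord G _ _ y

lemma add_two_mul_le_depositWord_alternating {a b : V} (hab : G.Adj a b) (K : ℕ) (h : V → ℕ) :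
    h b + 2 * K ≤ depositWord G (List.replicate K [a, b]).flatten h b := by
  induction K generalizing h with
  | zero => exact le_rfl
  | succ K ih =>
    have ha : h b < deposit G a h a := lt_deposit_of_adj hab h
    have hb : deposit G a h a < deposit G b (deposit G a h) b := lt_deposit_of_adj hab.symm _
    have hK := ih (deposit G b (deposit G a h))
    simp only [List.replicate_succ, List.flatten_cons, List.cons_append, List.nil_append,
      depositWord_cons]
    omega

lemma depositWord_le_add_count (G : SimpleGraph V) {w : List V}
    (hw : ∀ u ∈ w, ∀ v ∈ w, ¬ G.Adj u v) {h : V → ℕ} {M : ℕ} (hM : h ≤ M) (x : V) :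
    depositWord G w h x ≤ M + w.count x := by
  induction w using List.reverseRecOn generalizing x with
  | nil => exact hM x
  | append_singleton w v ih =>
    simp only [List.mem_append, List.mem_singleton] at hw
    have ih' := ih fun u hu u' hu' => hw u (Or.inl hu) u' (Or.inl hu')
    rw [depositWord_append, List.count_append]
    obtain rfl | hx := eq_or_ne x v
    · refine deposit_self_le_iff.2 fun y hy => ?_
      rw [List.count_singleton_self]
      obtain rfl | hxy := hy
      · exact Nat.lt_succ_of_le (ih' y)
      · have hyw : y ∉ w := fun hyw => hw x (Or.inr rfl) y (Or.inl hyw) hxy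
        have hy : depositWord G w h y ≤ M + w.count y := ih' y
        rw [List.count_eq_zero.2 hyw] at hy
        omega
    · calc depositWord G [v] (depositWord G w h) x = depositWord G w h x := deposit_of_ne G hx _
        _ ≤ M + (w.count x + [v].count x) := (ih' x).trans (by omega)

lemma depositWord_alternating_le {a b : V} (hne : a ≠ b) (hab : ¬ G.Adj a b) (K : ℕ)
    {h : V → ℕ} {M : ℕ} (hM : h ≤ M) :
    depositWord G (List.replicate K [a, b]).flatten h ≤ (M + K : ℕ) := by
  intro x
  have hindep : ∀ u ∈ (List.replicate K [a, b]).flatten,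
      ∀ v ∈ (List.replicate K [a, b]).flatten, ¬ G.Adj u v := by
    have hba : ¬ G.Adj b a := fun h => hab h.symm
    simp only [List.mem_flatten, List.mem_replicate]
    rintro u ⟨_, ⟨-, rfl⟩, hu⟩ v ⟨_, ⟨-, rfl⟩, hv⟩
    aesop
  have hcount : (List.replicate K [a, b]).flatten.count x ≤ K := by
    have hx : [a, b].count x ≤ 1 := List.nodup_iff_count_le_one.1 (by simpa using hne) x
    simpa [List.count_flatten] using Nat.mul_le_mul_left K hx
  exact (depositWord_le_add_count G hindep hM x).trans (Nat.add_le_add_left hcount M)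

/- The word is `T ++ (ab)ᴷ ++ T`, where depositing along `T` transports any height to every other
vertex. The edge `ab` makes each `ab` worth `2` in `G'` and only `1` in `G`, and `K = 2|T| + 1`
outweighs what `G` can gain during the two copies of `T`. -/
lemma exists_depositWord_add_one_le (hG' : G'.Connected) {a b : V} (hab : ¬ G.Adj a b)
    (hab' : G'.Adj a b) :
    ∃ w ≠ [], ∀ h, depositWord G w h + 1 ≤ depositWord G' w h := by
  obtain ⟨T, hT⟩ := exists_le_depositWord_of_connected hG'
  set K := 2 * T.length + 1 with hK
  set alt := (List.replicate K [a, b]).flatten with h_alt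
  refine ⟨T ++ alt ++ T, by simp [h_alt, hK], fun h x => ?_⟩
  have := hG'.nonempty
  obtain ⟨x₀, hx₀⟩ := Finite.exists_max h
  have upper : depositWord G (T ++ alt ++ T) h x ≤ h x₀ + T.length + K + T.length := by
    rw [depositWord_append, depositWord_append]
    exact depositWord_le_natCast_add_length G T (depositWord_alternating_le hab'.ne hab K
      (depositWord_le_natCast_add_length G T hx₀)) x
  have lower : h x₀ + 2 * K ≤ depositWord G' (T ++ alt ++ T) h x := by
    rw [depositWord_append, depositWord_append]
    calc h x₀ + 2 * K ≤ depositWord G' T h b + 2 * K := Nat.add_le_add_right (hT h x₀ b) _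
      _ ≤ depositWord G' alt (depositWord G' T h) b :=
        add_two_mul_le_depositWord_alternating hab' K _
      _ ≤ _ := hT _ b x
  simp only [Pi.add_apply, Pi.one_apply]
  omega

lemma heightProcess_mono (hG : G ≤ G') (h₀ : V → ℕ) (X : ℕ → V) (n : ℕ) :
    heightProcess G h₀ X n ≤ heightProcess G' h₀ X n := by
  induction n with
  | zero => exact le_rfl
  | succ n ih => exact deposit_mono hG _ ih

lemma heightProcess_add_count_le (hG : G ≤ G') {l : ℕ} {Q : Fin l → V}
    (hQ : ∀ h, depositWord G (List.ofFn Q) h + 1 ≤ depositWord G' (List.ofFn Q) h)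
    (h₀ : V → ℕ) (X : ℕ → V) (j : ℕ) :
    heightProcess G h₀ X (j * l) + (Nat.count (fun i => (fun r : Fin l => X (i * l + r)) = Q) j : ℕ)
      ≤ heightProcess G' h₀ X (j * l) := by
  induction j with
  | zero => simp [heightProcess]
  | succ j ih =>
    set c := Nat.count (fun i => (fun r : Fin l => X (i * l + r)) = Q) j
    set h := heightProcess G h₀ X (j * l)
    set h' := heightProcess G' h₀ X (j * l)
    rw [Nat.succ_mul, heightProcess_add, heightProcess_add, Nat.count_succ]
    split_ifs with hX
    · rw [hX]
      calc depositWord G (List.ofFn Q) h + (c + 1 : ℕ)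
          = depositWord G (List.ofFn Q) (h + c) + 1 := by
            rw [depositWord_add_natCast, Nat.cast_add, Nat.cast_one, add_assoc]
        _ ≤ depositWord G' (List.ofFn Q) (h + c) := hQ _
        _ ≤ depositWord G' (List.ofFn Q) h' := depositWord_mono le_rfl _ ih
    · rw [add_zero, ← depositWord_add_natCast]
      exact depositWord_mono hG _ ih

end Deposition

section Interleave

variable {V W : Type*}

/-- The number of `k < n` with `C k` in the range of `f`: the index of the term of `Y` that is due
at time `n` in `interleave f Y C`. -/
noncomputable def rangeCount (f : V → W) (C : ℕ → W) (n : ℕ) : ℕ :=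
  Nat.count (fun k => C k ∈ Set.range f) n

/-- The sequence obtained from `C` by replacing its successive entries in the range of `f` by the
images of the successive terms of `Y`. It couples uniform driving sequences on `V` and on `W`. -/
noncomputable def interleave (f : V → W) (Y : ℕ → V) (C : ℕ → W) (n : ℕ) : W :=
  if C n ∈ Set.range f then f (Y (rangeCount f C n)) else C n

lemma rangeCount_succ (f : V → W) (C : ℕ → W) (n : ℕ) :
    rangeCount f C (n + 1) = rangeCount f C n + if C n ∈ Set.range f then 1 else 0 := by
  rw [rangeCount, Nat.count_succ, ← rangeCount]

lemma exists_interleave_self_eq [Nonempty V] (f : V → W) (g : ℕ → W) :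
    ∃ y, interleave f y g = g := by
  refine ⟨fun j => Function.invFun f (g (Nat.nth (fun k => g k ∈ Set.range f) j)), ?_⟩
  ext n
  rw [interleave]
  split_ifs with hn
  · rw [rangeCount, Nat.nth_count (p := fun k => g k ∈ Set.range f) hn]
    exact Function.invFun_eq hn
  · rfl

/-- The equivalence class of `w` when the range of `f` is collapsed to a point: the entries that
`C` may have at a place where `interleave f Y C` takes the value `w`. -/
def collapseClass (f : V → W) (w : W) : Set W :=
  {w' | w' = w ∨ w' ∈ Set.range f ∧ w ∈ Set.range f}

lemma mem_range_iff_of_mem_collapseClass {f : V → W} {w w' : W} (hw : w' ∈ collapseClass f w) :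
    w' ∈ Set.range f ↔ w ∈ Set.range f := by
  rcases hw with rfl | ⟨hw', hw⟩
  exacts [Iff.rfl, iff_of_true hw' hw]

lemma interleave_eq_interleave_iff (f : V ↪ W) {Y y : ℕ → V} {C g : ℕ → W} {n c : ℕ}
    (hC : rangeCount f C n = c) (hg : rangeCount f g n = c) :
    interleave f Y C n = interleave f y g n ↔
      (g n ∈ Set.range f → Y c = y c) ∧ C n ∈ collapseClass f (g n) := by
  rw [interleave, interleave, hC, hg, collapseClass, Set.mem_ofPred_eq]
  by_cases hCn : C n ∈ Set.range f <;> by_cases hgn : g n ∈ Set.range f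
  · simp [hCn, hgn]
  · have hfg : f (Y c) ≠ g n := ne_of_mem_of_not_mem (Set.mem_range_self _) hgn
    simp [hCn, hgn, hfg, ne_of_mem_of_not_mem hCn hgn]
  · have hCf : C n ≠ f (y c) := (ne_of_mem_of_not_mem (Set.mem_range_self _) hCn).symm
    simp [hCn, hgn, hCf, (ne_of_mem_of_not_mem hgn hCn).symm]
  · simp [hCn, hgn]

lemma forall_lt_interleave_eq_iff (f : V ↪ W) (Y y : ℕ → V) (C : ℕ → W) {g : ℕ → W}
    (hg : interleave f y g = g) (n : ℕ) :
    (∀ k < n, interleave f Y C k = g k) ↔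
      (∀ j < rangeCount f g n, Y j = y j) ∧ ∀ k < n, C k ∈ collapseClass f (g k) := by
  induction n with
  | zero => simp [rangeCount]
  | succ n ih =>
    have step (hC : ∀ k < n, C k ∈ collapseClass f (g k)) :
        interleave f Y C n = g n ↔
          (g n ∈ Set.range f → Y (rangeCount f g n) = y (rangeCount f g n)) ∧
            C n ∈ collapseClass f (g n) := by
      have hcount : rangeCount f C n = rangeCount f g n :=
        le_antisymm
          (Nat.count_mono_left fun k hk => (mem_range_iff_of_mem_collapseClass (hC k hk)).1)
          (Nat.count_mono_left fun k hk => (mem_range_iff_of_mem_collapseClass (hC k hk)).2)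
      rw [← interleave_eq_interleave_iff f hcount rfl, hg]
    rw [Nat.forall_lt_succ_right, ih, rangeCount_succ, Nat.forall_lt_succ_right (n := n)]
    by_cases hgn : g n ∈ Set.range f
    · rw [if_pos hgn, Nat.forall_lt_succ_right]
      tauto
    · rw [if_neg hgn, add_zero]
      tauto

lemma prod_ncard_collapseClass (f : V ↪ W) (g : ℕ → W) (n : ℕ) :
    ∏ k ∈ Finset.range n, (collapseClass f (g k)).ncard = Nat.card V ^ rangeCount f g n := by
  induction n with
  | zero => simp [rangeCount]
  | succ n ih =>
    rw [Finset.prod_range_succ, ih, rangeCount_succ]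
    split_ifs with hgn
    · have hclass : collapseClass f (g n) = Set.range f := by
        ext w
        simp only [collapseClass, Set.mem_ofPred_eq]
        exact ⟨fun hw => hw.elim (· ▸ hgn) And.left, fun hw => Or.inr ⟨hw, hgn⟩⟩
      rw [hclass, Set.ncard_range_of_injective f.injective, pow_succ]
    · have hclass : collapseClass f (g n) = {g n} := by simp [collapseClass, hgn]
      rw [hclass, Set.ncard_singleton, mul_one, add_zero]

section Measurability

variable {Ω Ω₂ : Type*} [MeasurableSpace Ω] [MeasurableSpace Ω₂] {Y : ℕ → Ω → V} {C : ℕ → Ω₂ → W}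

lemma measurable_rangeCount [MeasurableSpace W] [DiscreteMeasurableSpace W] (f : V → W)
    (hC : ∀ k, Measurable (C k)) (n : ℕ) : Measurable fun ω => rangeCount f (C · ω) n := by
  induction n with
  | zero => simp only [rangeCount, Nat.count_zero, measurable_const]
  | succ n ih =>
    simp only [rangeCount_succ]
    exact ih.add (.ite (hC n .of_discrete) measurable_const measurable_const)

lemma measurable_interleave [MeasurableSpace V] [DiscreteMeasurableSpace V] [MeasurableSpace W]
    [DiscreteMeasurableSpace W] (f : V → W) (hY : ∀ j, Measurable (Y j))
    (hC : ∀ k, Measurable (C k)) (n : ℕ) :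
    Measurable fun ω : Ω × Ω₂ => interleave f (Y · ω.1) (C · ω.2) n := by
  have hYC : Measurable fun ω : Ω × Ω₂ => Y (rangeCount f (C · ω.2) n) ω.1 :=
    (measurable_from_prod_countable_right (f := fun p : ℕ × Ω => Y p.1 p.2) hY).comp
      (((measurable_rangeCount f hC n).comp measurable_snd).prodMk measurable_fst)
  have hrange : MeasurableSet {ω : Ω × Ω₂ | C n ω.2 ∈ Set.range f} :=
    measurable_snd (hC n (.of_discrete (s := Set.range f)))
  exact .ite hrange (Measurable.of_discrete.comp hYC) ((hC n).comp measurable_snd)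

end Measurability

variable [Fintype V] [Fintype W]

lemma deposit_map (G : SimpleGraph V) (f : V ↪ W) (v : V) (h : W → ℕ) :
    deposit (G.map f) (f v) h ∘ f = deposit G v (h ∘ f) := by
  ext x
  obtain rfl | hx := eq_or_ne x v
  · refine eq_of_forall_ge_iff fun M => ?_
    rw [Function.comp_apply, deposit_self_le_iff, deposit_self_le_iff]
    constructor
    · exact fun hM y hy => hM (f y) (hy.imp (congrArg f) SimpleGraph.map_adj_apply.2)
    · rintro hM w (rfl | hw)
      · exact hM x (Or.inl rfl)
      · obtain ⟨x', y, hxy, hx', rfl⟩ := (SimpleGraph.map_adj f G _ _).1 hw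
        exact hM y (Or.inr (f.injective hx' ▸ hxy))
  · simp [deposit_of_ne _ hx, deposit_of_ne _ (f.injective.ne hx)]

lemma heightProcess_map_interleave (G : SimpleGraph V) (f : V ↪ W) (h₀ : W → ℕ) (Y : ℕ → V)
    (C : ℕ → W) (n : ℕ) :
    heightProcess (G.map f) h₀ (interleave f Y C) n ∘ f =
      heightProcess G (h₀ ∘ f) Y (rangeCount f C n) := by
  induction n with
  | zero => rfl
  | succ n ih =>
    rw [heightProcess_succ, rangeCount_succ, interleave]
    split_ifs with hn
    · rw [deposit_map, ih, heightProcess_succ]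
    · rw [add_zero, ← ih]
      ext x
      exact deposit_of_ne _ (ne_of_mem_of_not_mem (Set.mem_range_self x) hn) _

end Interleave

section UniformIID

variable {V Ω : Type*} [Fintype V] [MeasurableSpace Ω] {μ : Measure Ω} {X : ℕ → Ω → V}

lemma IsUniformIID.measurable [MeasurableSpace V] (hX : IsUniformIID μ X) (n : ℕ) :
    Measurable (X n) :=
  measurable_to_countable' (hX.1 n)

lemma IsUniformIID.measurable_prefix [MeasurableSpace V] (hX : IsUniformIID μ X) (n : ℕ) :
    Measurable fun ω (k : Fin n) => X k ω :=
  measurable_pi_lambda _ fun k => hX.measurable k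

lemma IsUniformIID.map_prefix_eq_pi [Nonempty V] [MeasurableSpace V] [DiscreteMeasurableSpace V]
    (hX : IsUniformIID μ X) (n : ℕ) :
    μ.map (fun ω (k : Fin n) => X k ω) = Measure.pi fun _ => uniformOn Set.univ := by
  refine Measure.ext_of_singleton fun F => ?_
  obtain ⟨g, hg⟩ : ∃ g : ℕ → V, ∀ k : Fin n, g k = F k :=
    ⟨Function.extend Fin.val F fun _ => Classical.arbitrary V, Fin.val_injective.extend_apply F _⟩
  have hpre : (fun ω (k : Fin n) => X k ω) ⁻¹' {F} = {ω | ∀ k < n, X k ω = g k} := by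
    ext ω
    simp [funext_iff, Fin.forall_iff, ← hg]
  rw [Measure.map_apply (hX.measurable_prefix n) (.singleton F), hpre, hX.2]
  simp [uniformOn_univ]

lemma IsUniformIID.map_eq_uniformOn [Nonempty V] [MeasurableSpace V] [DiscreteMeasurableSpace V]
    (hX : IsUniformIID μ X) (n : ℕ) : μ.map (X n) = uniformOn Set.univ := by
  have hlast : X n = Function.eval (Fin.last n) ∘ fun ω (k : Fin (n + 1)) => X k ω := rfl
  rw [hlast, ← Measure.map_map (measurable_pi_apply _) (hX.measurable_prefix _),
    hX.map_prefix_eq_pi, (measurePreserving_eval _ _).map_eq]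

lemma IsUniformIID.indepFun [Nonempty V] [MeasurableSpace V] [DiscreteMeasurableSpace V]
    [IsProbabilityMeasure μ] (hX : IsUniformIID μ X) {i j : ℕ} (hij : i ≠ j) :
    IndepFun (X i) (X j) μ := by
  have hindep : iIndepFun (fun k : Fin (max i j + 1) => X k) μ := by
    have hmeas (k : Fin (max i j + 1)) : AEMeasurable (X k) μ := (hX.measurable k).aemeasurable
    rw [iIndepFun_iff_map_fun_eq_pi_map hmeas, hX.map_prefix_eq_pi]
    simp only [hX.map_eq_uniformOn]
  exact hindep.indepFun (i := ⟨i, by omega⟩) (j := ⟨j, by omega⟩) (by simpa using hij)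

lemma IsUniformIID.measure_forall_lt_mem [Nonempty V] (hX : IsUniformIID μ X) (n : ℕ)
    (t : ℕ → Set V) :
    μ {ω | ∀ k < n, X k ω ∈ t k} =
      ∏ k ∈ Finset.range n, ((t k).ncard : ℝ≥0∞) * (Fintype.card V : ℝ≥0∞)⁻¹ := by
  let _ : MeasurableSpace V := ⊤
  have hpre : {ω | ∀ k < n, X k ω ∈ t k} =
      (fun ω (k : Fin n) => X k ω) ⁻¹' Set.univ.pi fun k => t k := by
    ext ω
    simp [Fin.forall_iff]
  rw [hpre, ← Measure.map_apply (hX.measurable_prefix n) (.univ_pi fun _ => .of_discrete),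
    hX.map_prefix_eq_pi, Measure.pi_pi, Finset.prod_range]
  refine Finset.prod_congr rfl fun k _ => ?_
  rw [uniformOn_univ, Measure.count_apply .of_discrete, div_eq_mul_inv,
    ← (Set.toFinite (t k)).cast_ncard_eq]
  rfl

lemma IsUniformIID.ae_tendsto_count_div [Nonempty V] [IsProbabilityMeasure μ]
    (hX : IsUniformIID μ X) (U : Set V) :
    ∀ᵐ ω ∂μ, Tendsto (fun n : ℕ => (Nat.count (fun k => X k ω ∈ U) n : ℝ) / n) atTop
      (𝓝 (U.ncard / Fintype.card V)) := by
  let _ : MeasurableSpace V := ⊤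
  let g : V → ℝ := U.indicator 1
  have hg : Measurable g := measurable_from_top
  have hgint : Integrable (g ∘ X 0) μ :=
    .of_bound (hg.comp (hX.measurable 0)).aestronglyMeasurable 1
      (ae_of_all _ fun ω => by by_cases h : X 0 ω ∈ U <;> simp [g, h])
  have hident (k : ℕ) : IdentDistrib (X k) (X 0) μ μ :=
    ⟨(hX.measurable k).aemeasurable, (hX.measurable 0).aemeasurable,
      (hX.map_eq_uniformOn k).trans (hX.map_eq_uniformOn 0).symm⟩
  have hmean : ∫ ω, (g ∘ X 0) ω ∂μ = U.ncard / Fintype.card V := by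
    have hU : μ (X 0 ⁻¹' U) = U.ncard * (Fintype.card V : ℝ≥0∞)⁻¹ := by
      simpa [Set.preimage] using hX.measure_forall_lt_mem 1 fun _ => U
    have hgX : g ∘ X 0 = (X 0 ⁻¹' U).indicator fun _ => 1 := rfl
    rw [hgX, integral_indicator_const _ (hX.measurable 0 .of_discrete), Measure.real, hU]
    simp [div_eq_mul_inv]
  have hlln := strong_law_ae_real (fun k => g ∘ X k) hgint
    (fun i j hij => (hX.indepFun hij).comp hg hg) fun k => (hident k).comp hg
  rw [hmean] at hlln
  filter_upwards [hlln] with ω hω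
  simpa [g, Set.indicator_apply, Nat.count_eq_card_filter_range, Finset.sum_boole] using hω

lemma forall_lt_mul_div_mod_iff {l : ℕ} (hl : 0 < l) {n : ℕ} {P : ℕ → ℕ → Prop} :
    (∀ k < n * l, P (k / l) (k % l)) ↔ ∀ j < n, ∀ r < l, P j r := by
  refine ⟨fun h j hj r hr => ?_, fun h k hk => h _ (Nat.div_lt_of_lt_mul (by rwa [mul_comm])) _
    (Nat.mod_lt _ hl)⟩
  have hk : r + j * l < n * l := by nlinarith
  simpa [Nat.add_mul_div_right r j hl, Nat.div_eq_of_lt hr, Nat.mod_eq_of_lt hr] using h _ hk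

lemma IsUniformIID.blocks (hX : IsUniformIID μ X) {l : ℕ} (hl : 0 < l) :
    IsUniformIID μ fun j ω (r : Fin l) => X (j * l + r) ω := by
  refine ⟨fun j F => ?_, fun n F => ?_⟩
  · have hset : {ω | (fun r : Fin l => X (j * l + r) ω) = F} =
        ⋂ r : Fin l, {ω | X (j * l + r) ω = F r} := by
      ext ω
      simp [funext_iff]
    rw [hset]
    exact .iInter fun r => hX.1 _ _
  · let g (k : ℕ) : V := F (k / l) ⟨k % l, Nat.mod_lt _ hl⟩
    have hset : {ω | ∀ j < n, (fun r : Fin l => X (j * l + r) ω) = F j} =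
        {ω | ∀ k < n * l, X k ω = g k} := by
      ext ω
      have := forall_lt_mul_div_mod_iff hl (n := n)
        (P := fun j r => ∀ hr : r < l, X (j * l + r) ω = F j ⟨r, hr⟩)
      simpa [funext_iff, Fin.forall_iff, Nat.div_add_mod', Nat.mod_lt _ hl, g, imp_forall_iff]
        using this.symm
    rw [hset, hX.2, Fintype.card_fun, Fintype.card_fin, Nat.cast_pow, ENNReal.inv_pow, ← pow_mul,
      mul_comm]

lemma exists_isUniformIID (V : Type*) [Fintype V] [Nonempty V] :
    ∃ (Ω : Type) (_ : MeasurableSpace Ω) (μ : Measure Ω) (_ : IsProbabilityMeasure μ)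
      (X : ℕ → Ω → V), IsUniformIID μ X := by
  let e := Fintype.equivFin V
  have : Nonempty (Fin (Fintype.card V)) := e.symm.nonempty
  refine ⟨ℕ → Fin (Fintype.card V), inferInstance, Measure.infinitePi fun _ => uniformOn Set.univ,
    inferInstance, fun k ω => e.symm (ω k), fun n v => ?_, fun n g => ?_⟩
  · have hset : {ω : ℕ → Fin (Fintype.card V) | e.symm (ω n) = v} =
        (fun ω => ω n) ⁻¹' {e v} := by
      ext ω
      simp [Equiv.symm_apply_eq]
    rw [hset]
    exact measurable_pi_apply (X := fun _ : ℕ => Fin (Fintype.card V)) n .of_discrete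
  · have hset : {ω : ℕ → Fin (Fintype.card V) | ∀ k < n, e.symm (ω k) = g k} =
        (Finset.range n : Set ℕ).pi fun k => {e (g k)} := by
      ext ω
      simp [Equiv.symm_apply_eq, Set.mem_pi]
    rw [hset, Measure.infinitePi_pi _ fun _ _ => .of_discrete]
    simp [uniformOn_univ]

variable {W Ω₂ : Type*} [Fintype W] [MeasurableSpace Ω₂] {ν : Measure Ω₂}
  {Y : ℕ → Ω → V} {C : ℕ → Ω₂ → W}

lemma IsUniformIID.prod_interleave [Nonempty V] [SFinite ν]
    (hY : IsUniformIID μ Y) (hC : IsUniformIID ν C) (f : V ↪ W) :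
    IsUniformIID (μ.prod ν) fun n ω => interleave f (Y · ω.1) (C · ω.2) n := by
  let _ : MeasurableSpace V := ⊤
  let _ : MeasurableSpace W := ⊤
  refine ⟨fun n w => measurable_interleave f hY.measurable hC.measurable n (.singleton w),
    fun n g => ?_⟩
  obtain ⟨y, hy⟩ := exists_interleave_self_eq f g
  have : Nonempty W := .map f ‹_›
  have hset : {ω : Ω × Ω₂ | ∀ k < n, interleave f (Y · ω.1) (C · ω.2) k = g k} =
      {ω | ∀ j < rangeCount f g n, Y j ω = y j} ×ˢ
        {ω | ∀ k < n, C k ω ∈ collapseClass f (g k)} := by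
    ext ω
    exact forall_lt_interleave_eq_iff f _ y _ hy n
  have hcard : (Fintype.card V : ℝ≥0∞) ≠ 0 := by simp
  rw [hset, Measure.prod_prod, hY.2, hC.measure_forall_lt_mem, Finset.prod_mul_distrib,
    Finset.prod_const, Finset.card_range, ← Nat.cast_prod, prod_ncard_collapseClass,
    Nat.card_eq_fintype_card, Nat.cast_pow, ← mul_assoc, ← mul_pow,
    ENNReal.inv_mul_cancel hcard (by simp), one_pow, one_mul]

end UniformIID

section GrowthRate

variable {V W : Type*} [Fintype V] [Fintype W]

/-- The height above `x` at time `n`, started from the flat profile and rescaled by `#V / n` as in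
`IsGrowthRate` (with value `0` at `n = 0`). -/
noncomputable def scaledHeight (G : SimpleGraph V) (X : ℕ → V) (x : V) (n : ℕ) : ℝ :=
  Fintype.card V * heightProcess G (fun _ => 0) X n x / n

lemma scaledHeight_mono {G G' : SimpleGraph V} (hG : G ≤ G') (X : ℕ → V) (x : V) (n : ℕ) :
    scaledHeight G X x n ≤ scaledHeight G' X x n := by
  have := heightProcess_mono hG (fun _ => 0) X n x
  unfold scaledHeight
  gcongr

lemma IsGrowthRate.ae_tendsto_scaledHeight {Ω : Type} [MeasurableSpace Ω] {μ : Measure Ω}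
    [IsProbabilityMeasure μ] {G : SimpleGraph V} {γ : ℝ} {X : ℕ → Ω → V}
    (h : IsGrowthRate G γ) (hX : IsUniformIID μ X) (x : V) :
    ∀ᵐ ω ∂μ, Tendsto (scaledHeight G (X · ω) x) atTop (𝓝 γ) := by
  obtain ⟨hsup, hinf⟩ := h.2 μ X hX
  filter_upwards [hsup, hinf] with ω hsup hinf
  refine tendsto_of_tendsto_of_tendsto_of_le_of_le hinf hsup (fun n => ?_) fun n => ?_ <;>
    unfold scaledHeight <;> gcongr
  · exact ciInf_le (Set.finite_range _).bddBelow x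
  · exact le_ciSup (f := fun x => (heightProcess G (fun _ => 0) (X · ω) n x : ℝ))
      (Set.finite_range _).bddAbove x

lemma tendsto_scaledHeight_map_interleave {G : SimpleGraph V} (f : V ↪ W) {γ : ℝ} {Y : ℕ → V}
    {C : ℕ → W} {x : V} (hY : Tendsto (scaledHeight G Y x) atTop (𝓝 γ))
    (hC : Tendsto (fun n : ℕ => (rangeCount f C n : ℝ) / n) atTop
      (𝓝 (Fintype.card V / Fintype.card W))) :
    Tendsto (scaledHeight (G.map f) (interleave f Y C) (f x)) atTop (𝓝 γ) := by
  have hV : (0 : ℝ) < Fintype.card V := mod_cast Fintype.card_pos_iff.2 ⟨x⟩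
  have hW : (0 : ℝ) < Fintype.card W := mod_cast Fintype.card_pos_iff.2 ⟨f x⟩
  have hcount : Tendsto (rangeCount f C) atTop atTop := by
    rw [← tendsto_natCast_atTop_iff (R := ℝ)]
    refine (hC.pos_mul_atTop (div_pos hV hW) tendsto_natCast_atTop_atTop).congr' ?_
    filter_upwards [eventually_ne_atTop 0] with n hn
    exact div_mul_cancel₀ _ (Nat.cast_ne_zero.2 hn)
  have hlim := ((hY.comp hcount).mul hC).mul_const (Fintype.card W / Fintype.card V : ℝ)
  rw [mul_assoc, div_mul_div_cancel₀ hW.ne', div_self hV.ne', mul_one] at hlim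
  refine hlim.congr' ?_
  filter_upwards [eventually_ne_atTop 0, hcount.eventually_ne_atTop 0] with n hn hNn
  have hheight : heightProcess (G.map f) (fun _ => 0) (interleave f Y C) n (f x) =
      heightProcess G (fun _ => 0) Y (rangeCount f C n) x :=
    congrFun (heightProcess_map_interleave G f (fun _ => 0) Y C n) x
  rw [scaledHeight, hheight, Function.comp_apply, scaledHeight]
  field_simp

lemma IsGrowthRate.exists_ae_tendsto_scaledHeight_map {G : SimpleGraph V} {γ : ℝ}
    (h : IsGrowthRate G γ) (f : V ↪ W) (x : V) :
    ∃ (Ω : Type) (_ : MeasurableSpace Ω) (μ : Measure Ω) (_ : IsProbabilityMeasure μ)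
      (X : ℕ → Ω → W), IsUniformIID μ X ∧
        ∀ᵐ ω ∂μ, Tendsto (scaledHeight (G.map f) (X · ω) (f x)) atTop (𝓝 γ) := by
  have : Nonempty V := ⟨x⟩
  have : Nonempty W := ⟨f x⟩
  obtain ⟨Ω₁, _, μ, _, Y, hY⟩ := exists_isUniformIID V
  obtain ⟨Ω₂, _, ν, _, C, hC⟩ := exists_isUniformIID W
  refine ⟨Ω₁ × Ω₂, inferInstance, μ.prod ν, inferInstance, _, hY.prod_interleave hC f, ?_⟩
  have hcount := hC.ae_tendsto_count_div (Set.range f)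
  rw [Set.ncard_range_of_injective f.injective, Nat.card_eq_fintype_card] at hcount
  filter_upwards [Measure.quasiMeasurePreserving_fst.ae (h.ae_tendsto_scaledHeight hY x),
    Measure.quasiMeasurePreserving_snd.ae hcount] with ω hω₁ hω₂
  exact tendsto_scaledHeight_map_interleave f hω₁ hω₂

lemma IsGrowthRate.le_of_map_le [Nonempty V] {G : SimpleGraph V} {G' : SimpleGraph W} {γ γ' : ℝ}
    (h : IsGrowthRate G γ) (h' : IsGrowthRate G' γ') {f : V ↪ W} (hf : G.map f ≤ G') : γ ≤ γ' := by
  obtain ⟨x⟩ := ‹Nonempty V›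
  obtain ⟨Ω, _, μ, _, X, hX, hGX⟩ := h.exists_ae_tendsto_scaledHeight_map f x
  obtain ⟨ω, hω, hω'⟩ := (hGX.and (h'.ae_tendsto_scaledHeight hX (f x))).exists
  exact le_of_tendsto_of_tendsto' hω hω' (scaledHeight_mono hf (X · ω) (f x))

lemma lt_of_tendsto_scaledHeight {G G' : SimpleGraph V} (hG : G ≤ G') {l : ℕ} (hl : 0 < l)
    {Q : Fin l → V}
    (hQ : ∀ h, depositWord G (List.ofFn Q) h + 1 ≤ depositWord G' (List.ofFn Q) h)
    {X : ℕ → V} {x : V} {γ γ' c : ℝ} (hγ : Tendsto (scaledHeight G X x) atTop (𝓝 γ))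
    (hγ' : Tendsto (scaledHeight G' X x) atTop (𝓝 γ'))
    (hcount : Tendsto
      (fun j : ℕ => (Nat.count (fun i => (fun r : Fin l => X (i * l + r)) = Q) j : ℝ) / j) atTop
      (𝓝 c)) (hc : 0 < c) :
    γ < γ' := by
  have hV : (0 : ℝ) < Fintype.card V := mod_cast Fintype.card_pos_iff.2 ⟨x⟩
  have : (0 : ℝ) < l := mod_cast hl
  have hmul : Tendsto (fun j : ℕ => j * l) atTop atTop := tendsto_id.atTop_mul_const' hl
  have hle : γ + Fintype.card V / l * c ≤ γ' := by
    refine le_of_tendsto_of_tendsto' ((hγ.comp hmul).add (hcount.const_mul _)) (hγ'.comp hmul)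
      fun j => ?_
    have hj := heightProcess_add_count_le hG hQ (fun _ => 0) X j x
    simp only [Pi.add_apply, Pi.natCast_apply, Nat.cast_id] at hj
    rw [Function.comp_apply, Function.comp_apply, scaledHeight, scaledHeight, Nat.cast_mul,
      div_mul_div_comm, mul_comm (l : ℝ), ← add_div, ← mul_add]
    gcongr
    exact_mod_cast hj
  exact (lt_add_of_pos_right γ (by positivity)).trans_le hle

lemma IsGrowthRate.lt_of_map_lt [Nonempty V] {G : SimpleGraph V} {G' : SimpleGraph W} {γ γ' : ℝ}
    (h : IsGrowthRate G γ) (h' : IsGrowthRate G' γ') {f : V ↪ W} (hf : G.map f < G')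
    (hG' : G'.Connected) : γ < γ' := by
  obtain ⟨a, b, hab', hab⟩ : ∃ a b, G'.Adj a b ∧ ¬ (G.map f).Adj a b := by
    simpa only [SimpleGraph.le_iff_adj, not_forall, exists_prop] using hf.not_ge
  obtain ⟨w, hw, hwG⟩ := exists_depositWord_add_one_le hG' hab hab'
  have hl : 0 < w.length := List.length_pos_iff.2 hw
  rw [← List.ofFn_get w] at hwG
  obtain ⟨x⟩ := ‹Nonempty V›
  have : Nonempty W := ⟨f x⟩
  obtain ⟨Ω, _, μ, _, X, hX, hGX⟩ := h.exists_ae_tendsto_scaledHeight_map f x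
  have hblocks := (hX.blocks hl).ae_tendsto_count_div {w.get}
  simp only [Set.mem_singleton_iff, Set.ncard_singleton, Nat.cast_one] at hblocks
  obtain ⟨ω, hω, hω', hcount⟩ :=
    (hGX.and ((h'.ae_tendsto_scaledHeight hX (f x)).and hblocks)).exists
  exact lt_of_tendsto_scaledHeight hf.le hl hwG hω hω' (by convert hcount) (by positivity)

lemma IsGrowthRate.eq_of_iso [Nonempty V] {G : SimpleGraph V} {G' : SimpleGraph W} {γ γ' : ℝ}
    (h : IsGrowthRate G γ) (h' : IsGrowthRate G' γ') (e : G ≃g G') : γ = γ' := by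
  have : Nonempty W := e.toEquiv.symm.nonempty
  exact le_antisymm
    (h.le_of_map_le h' ((SimpleGraph.map_le_iff_le_comap e.toEmbedding.toEmbedding _ _).2
      e.toHom.le_comap))
    (h'.le_of_map_le h ((SimpleGraph.map_le_iff_le_comap e.symm.toEmbedding.toEmbedding _ _).2
      e.symm.toHom.le_comap))

end GrowthRate

lemma surjective_and_adj_iff_of_map_eq {V W : Type*} [Nonempty V] {G : SimpleGraph V}
    {G' : SimpleGraph W} {f : V ↪ W} (hf : G.map f = G') (hG' : G'.Connected) :
    Function.Surjective f ∧ ∀ x y, G.Adj x y ↔ G'.Adj (f x) (f y) := by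
  subst hf
  refine ⟨fun w => ?_, fun x y => SimpleGraph.map_adj_apply.symm⟩
  obtain ⟨x⟩ := ‹Nonempty V›
  obtain rfl | hne := eq_or_ne w (f x)
  · exact ⟨x, rfl⟩
  · have : Nontrivial W := ⟨w, f x, hne⟩
    obtain ⟨w', hw⟩ := hG'.preconnected.exists_adj_of_nontrivial w
    obtain ⟨v, -, -, rfl, -⟩ := (SimpleGraph.map_adj f G w w').1 hw
    exact ⟨v, rfl⟩

theorem stmt12_general {V W : Type*} [Fintype V] [Fintype W] [Nonempty V] {G : SimpleGraph V}
    {G' : SimpleGraph W} (f : G.Copy G') (hG' : G'.Connected) {γ γ' : ℝ} (h : IsGrowthRate G γ)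
    (h' : IsGrowthRate G' γ') :
    γ ≤ γ' ∧ (γ = γ' ↔ Function.Surjective f ∧ ∀ x y, G.Adj x y ↔ G'.Adj (f x) (f y)) := by
  have hf : G.map f.toEmbedding ≤ G' :=
    (SimpleGraph.map_le_iff_le_comap f.toEmbedding G G').2 f.toHom.le_comap
  refine ⟨h.le_of_map_le h' hf, fun hγ => ?_, fun ⟨hsurj, hadj⟩ => ?_⟩
  · by_contra hne
    have hlt : G.map f.toEmbedding < G' :=
      hf.lt_of_ne fun heq => hne (surjective_and_adj_iff_of_map_eq heq hG')
    exact (h.lt_of_map_lt h' hlt hG').ne hγ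
  · exact h.eq_of_iso h' ⟨.ofBijective f ⟨f.injective, hsurj⟩, (hadj _ _).symm⟩

theorem stmt12 {V' : Type} [Fintype V'] [Nonempty V'] (G' : SimpleGraph V')
    (s : Set V') (hs : s.Nonempty) (G : SimpleGraph s)
    (hsub : ∀ x y : s, G.Adj x y → G'.Adj x y)
    (hG : G.Connected) (hG' : G'.Connected)
    (γ γ' : ℝ) (h : IsGrowthRate G γ) (h' : IsGrowthRate G' γ') :
    γ ≤ γ' ∧ (γ = γ' ↔ s = Set.univ ∧ ∀ x y : s, (G.Adj x y ↔ G'.Adj x y)) := by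
  have := hs.to_subtype
  have hgen := stmt12_general ⟨⟨Subtype.val, hsub _ _⟩, Subtype.val_injective⟩ hG' h h'
  rwa [← Set.range_eq_univ, SimpleGraph.Copy.coe_mk, RelHom.coeFn_mk, Subtype.range_coe] at hgen
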